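/- arXiv:2206.02185 — 3 statements merged into one kernel-verified Lean document; each statement's English description precedes it below -/
import Mathlib

section
/- Let R and S be two squares in the plane (arbitrary orientations and sizes) that are crossing, meaning R ∩ S is nonempty but contains none of the eight vertices of R and S. Then the centre of R lies in S and the centre of S lies in R. -/
open Classical MeasureTheory
noncomputable section

/-- Points of the Euclidean plane. -/
abbrev Pt := EuclideanSpace ℝ (Fin 2)

/-- A finite point set `H` hits every member of the family `F`. -/
def Hits (H : Finset Pt) (F : Finset (Set Pt)) : Prop := ∀ S ∈ F, ∃ p ∈ H, p ∈ S

/-- The hitting number τ of a family. -/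
def hitNum (F : Finset (Set Pt)) : ℕ := sInf {n | ∃ H : Finset Pt, H.card = n ∧ Hits H F}

/-- The packing number ν of a family. -/
def packNum (F : Finset (Set Pt)) : ℕ :=
  sSup {n | ∃ P ⊆ F, P.card = n ∧ (P : Set (Set Pt)).Pairwise Disjoint}

/-- The maximum degree Δ of a family: the maximum number of members containing a common point. -/
def maxDeg (F : Finset (Set Pt)) : ℕ :=
  sSup {n | ∃ p : Pt, (F.filter fun S => p ∈ S).card = n}

/-- The chromatic number χ of the intersection graph of a family. -/
def chromNum (F : Finset (Set Pt)) : ℕ :=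
  sInf {n | ∃ col : Set Pt → ℕ, (∀ S ∈ F, col S < n) ∧
    ∀ S ∈ F, ∀ T ∈ F, S ≠ T → (S ∩ T).Nonempty → col S ≠ col T}

/-- Hitting-`t`-degeneracy: every nonempty subfamily has a member whose closed
neighbourhood within the subfamily can be hit by at most `t` points. -/
def HitDeg (t : ℕ) (F : Finset (Set Pt)) : Prop :=
  ∀ F' ⊆ F, F'.Nonempty → ∃ S ∈ F',
    hitNum (F'.filter fun T => (T ∩ S).Nonempty) ≤ t

/-- `D`-degeneracy of a family: every nonempty subfamily has a member intersecting
at most `D` other members of the subfamily. -/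
def FamDeg (D : ℕ) (F : Finset (Set Pt)) : Prop :=
  ∀ F' ⊆ F, F'.Nonempty → ∃ S ∈ F',
    (F'.filter fun T => T ≠ S ∧ (T ∩ S).Nonempty).card ≤ D

/-- First coordinate of `x - c` in the rotated (by `θ`) orthonormal frame. -/
def sqForm1 (c : Pt) (θ : ℝ) (x : Pt) : ℝ :=
  Real.cos θ * (x 0 - c 0) + Real.sin θ * (x 1 - c 1)

/-- Second coordinate of `x - c` in the rotated (by `θ`) orthonormal frame. -/
def sqForm2 (c : Pt) (θ : ℝ) (x : Pt) : ℝ :=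
  Real.sin θ * (x 0 - c 0) - Real.cos θ * (x 1 - c 1)

/-- The (closed, possibly rotated) square with centre `c`, rotation angle `θ` and side `s`. -/
def sqSet (c : Pt) (θ s : ℝ) : Set Pt :=
  {x | |sqForm1 c θ x| ≤ s / 2 ∧ |sqForm2 c θ x| ≤ s / 2}

/-- The four vertices of the square with centre `c`, angle `θ` and side `s`. -/
def sqVertices (c : Pt) (θ s : ℝ) : Set Pt :=
  {x | |sqForm1 c θ x| = s / 2 ∧ |sqForm2 c θ x| = s / 2}

/-- A set is a (possibly rotated) unit square. -/
def IsUnitSquare (S : Set Pt) : Prop := ∃ c θ, S = sqSet c θ 1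

/-- A set is a (possibly rotated) square of some positive side length. -/
def IsSquareSet (S : Set Pt) : Prop := ∃ c θ s, 0 < s ∧ S = sqSet c θ s

/-!
Suppose the centre of `S` lies outside `R`, and walk towards it from a common point of `R` and `S`.
The walk leaves `R` through a point `z` of some side `ℓ` of `R`, and the centre of `S` lies strictly
beyond the line of `ℓ`. As `S` contains no vertex of `R`, its chord on that line stays within `ℓ`.
Let `v` be the vertex of `S` lying deepest on the inner side of the line, at depth `t`. The angle at
`v` is a right angle, so the chord contains the foot of the perpendicular from `v` and also one of
the two points at distance `t` from that foot. Hence `t` is at most the side length of `R`, so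
that `v` lies in `R`, a contradiction.
-/

section Order

lemma exists_mem_segment_le_eq_lt {ι 𝕜 : Type*} [Finite ι] [Field 𝕜] [LinearOrder 𝕜]
    [IsStrictOrderedRing 𝕜] {u v w : ι → 𝕜} (hu : u ≤ w) (hv : ¬v ≤ w) :
    ∃ x ∈ segment 𝕜 u v, x ≤ w ∧ ∃ i, x i = w i ∧ w i < v i := by
  let exitTime (i : ι) : 𝕜 := (w i - u i) / (v i - u i)
  obtain ⟨j, hj⟩ : ∃ j, w j < v j := by simpa only [Pi.le_def, not_forall, not_le] using hv
  obtain ⟨i, hi, hmin⟩ :=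
    Set.exists_min_image {i | w i < v i} exitTime (Set.toFinite _) ⟨j, hj⟩
  have hpos {k : ι} (hk : w k < v k) : 0 < v k - u k := sub_pos.2 ((hu k).trans_lt hk)
  have h₀ : 0 ≤ exitTime i := div_nonneg (sub_nonneg.2 (hu i)) (hpos hi).le
  have h₁ : exitTime i ≤ 1 := (div_le_one (hpos hi)).2 (sub_le_sub_right hi.le _)
  refine ⟨u + exitTime i • (v - u), ?_, fun k ↦ ?_, i, ?_, hi⟩
  · rw [segment_eq_image']
    exact ⟨_, ⟨h₀, h₁⟩, rfl⟩
  · simp only [Pi.add_apply, Pi.smul_apply, Pi.sub_apply, smul_eq_mul]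
    obtain hk | hk := lt_or_ge (w k) (v k)
    · linarith [(le_div_iff₀ (hpos hk)).1 (hmin k hk)]
    · linear_combination (1 - exitTime i) * hu k + exitTime i * hk
  · simp only [Pi.add_apply, Pi.smul_apply, Pi.sub_apply, smul_eq_mul, exitTime,
      div_mul_cancel₀ _ (hpos hi).ne', add_sub_cancel]

lemma ordConnected_subset_Icc {α : Type*} [LinearOrder α] {A : Set α} (hA : A.OrdConnected)
    {a b : α} (ha : a ∉ A) (hb : b ∉ A) (hne : (A ∩ Set.Icc a b).Nonempty) :
    A ⊆ Set.Icc a b := by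
  obtain ⟨y, hyA, hay, hyb⟩ := hne
  intro x hx
  by_contra hout
  obtain hxa | hbx : x < a ∨ b < x := by
    simpa only [Set.mem_Icc, not_and_or, not_le] using hout
  · exact ha (hA.out hx hyA ⟨hxa.le, hay⟩)
  · exact hb (hA.out hyA hx ⟨hyb, hbx.le⟩)

end Order

section Frame

open Real

/-- The point with coordinates `(x, y)` in the orthonormal frame with origin `c` and angle `θ`, in
which coordinates are read off by `sqForm1 c θ` and `sqForm2 c θ`. -/
def sqPoint (c : Pt) (θ x y : ℝ) : Pt :=
  !₂[c 0 + (cos θ * x + sin θ * y), c 1 + (sin θ * x - cos θ * y)]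

variable (c v z : Pt) (θ φ x y : ℝ)

lemma sqForm1_sqPoint :
    sqForm1 c φ (sqPoint v θ x y) = sqForm1 c φ v + (cos (φ - θ) * x - sin (φ - θ) * y) := by
  simp only [sqForm1, sqPoint, cos_sub, sin_sub, Matrix.cons_val_zero, Matrix.cons_val_one]
  ring

lemma sqForm2_sqPoint :
    sqForm2 c φ (sqPoint v θ x y) = sqForm2 c φ v + (sin (φ - θ) * x + cos (φ - θ) * y) := by
  simp only [sqForm2, sqPoint, cos_sub, sin_sub, Matrix.cons_val_zero, Matrix.cons_val_one]
  ring

@[simp]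
lemma sqForm1_sqPoint_same : sqForm1 c θ (sqPoint v θ x y) = sqForm1 c θ v + x := by
  simp [sqForm1_sqPoint]

@[simp]
lemma sqForm2_sqPoint_same : sqForm2 c θ (sqPoint v θ x y) = sqForm2 c θ v + y := by
  simp [sqForm2_sqPoint]

@[simp]
lemma sqForm1_self : sqForm1 c θ c = 0 := by simp [sqForm1]

@[simp]
lemma sqForm2_self : sqForm2 c θ c = 0 := by simp [sqForm2]

lemma sqPoint_sqForm : sqPoint c θ (sqForm1 c θ z) (sqForm2 c θ z) = z := by
  ext i
  fin_cases i
  · simp only [sqPoint, sqForm1, sqForm2, Fin.zero_eta, Matrix.cons_val_zero]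
    linear_combination (z 0 - c 0) * sin_sq_add_cos_sq θ
  · simp only [sqPoint, sqForm1, sqForm2, Fin.mk_one, Matrix.cons_val_one,
      Matrix.cons_val_fin_one]
    linear_combination (z 1 - c 1) * sin_sq_add_cos_sq θ

lemma sqForm1_add_pi_div_two : sqForm1 c (θ + π / 2) z = -sqForm2 c θ z := by
  simp only [sqForm1, sqForm2, cos_add_pi_div_two, sin_add_pi_div_two]
  ring

lemma sqForm2_add_pi_div_two : sqForm2 c (θ + π / 2) z = sqForm1 c θ z := by
  simp only [sqForm1, sqForm2, cos_add_pi_div_two, sin_add_pi_div_two]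
  ring

variable {α β : ℝ}

lemma sqForm1_combo (h : α + β = 1) :
    sqForm1 c θ (α • v + β • z) = α * sqForm1 c θ v + β * sqForm1 c θ z := by
  simp only [sqForm1, PiLp.add_apply, PiLp.smul_apply, smul_eq_mul]
  linear_combination (cos θ * c 0 + sin θ * c 1) * h

lemma sqForm2_combo (h : α + β = 1) :
    sqForm2 c θ (α • v + β • z) = α * sqForm2 c θ v + β * sqForm2 c θ z := by
  simp only [sqForm2, PiLp.add_apply, PiLp.smul_apply, smul_eq_mul]
  linear_combination (sin θ * c 0 - cos θ * c 1) * h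

end Frame

section Square

open Real

variable {c z w : Pt} {θ φ s : ℝ}

lemma periodic_sqSet (c : Pt) (s : ℝ) : Function.Periodic (fun θ ↦ sqSet c θ s) (π / 2) := by
  intro θ
  ext x
  simp only [sqSet, Set.mem_ofPred_eq, sqForm1_add_pi_div_two, sqForm2_add_pi_div_two, abs_neg,
    and_comm]

lemma periodic_sqVertices (c : Pt) (s : ℝ) :
    Function.Periodic (fun θ ↦ sqVertices c θ s) (π / 2) := by
  intro θ
  ext x
  simp only [sqVertices, Set.mem_ofPred_eq, sqForm1_add_pi_div_two, sqForm2_add_pi_div_two,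
    abs_neg, and_comm]

lemma mem_sqSet_iff_forall :
    z ∈ sqSet c θ s ↔ ∀ k : Fin 4, sqForm1 c (θ + (k : ℕ) * (π / 2)) z ≤ s / 2 := by
  have quarter (n : ℕ) : θ + ((n + 1 : ℕ) : ℝ) * (π / 2) = θ + n * (π / 2) + π / 2 := by
    push_cast; ring
  simp only [Fin.forall_fin_succ, Fin.val_succ, Fin.val_zero, quarter, Nat.cast_zero, zero_mul,
    add_zero, sqForm1_add_pi_div_two, sqForm2_add_pi_div_two, IsEmpty.forall_iff, and_true, sqSet,
    Set.mem_ofPred_eq, abs_le]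
  constructor
  · rintro ⟨⟨_, _⟩, _, _⟩
    refine ⟨?_, ?_, ?_, ?_⟩ <;> linarith
  · rintro ⟨_, _, _, _⟩
    refine ⟨⟨?_, ?_⟩, ?_, ?_⟩ <;> linarith

lemma convex_sqSet (c : Pt) (θ s : ℝ) : Convex ℝ (sqSet c θ s) := by
  intro x hx y hy α β hα hβ hαβ
  rw [mem_sqSet_iff_forall] at *
  intro k
  rw [sqForm1_combo _ _ _ _ hαβ]
  exact convex_Iic (𝕜 := ℝ) (s / 2) (hx k) (hy k) hα hβ hαβ

lemma half_side_nonneg_of_mem_sqSet (hz : z ∈ sqSet c θ s) : 0 ≤ s / 2 :=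
  (abs_nonneg _).trans hz.1

lemma center_mem_sqSet (hs : 0 ≤ s / 2) : c ∈ sqSet c θ s := by
  simpa [sqSet] using hs

lemma exists_mem_segment_mem_side (hz : z ∈ sqSet c θ s) (hw : w ∉ sqSet c θ s) :
    ∃ θ', sqSet c θ' s = sqSet c θ s ∧ sqVertices c θ' s = sqVertices c θ s ∧
      ∃ x ∈ segment ℝ z w, x ∈ sqSet c θ s ∧
        sqForm1 c θ' x = s / 2 ∧ s / 2 < sqForm1 c θ' w := by
  rw [mem_sqSet_iff_forall] at hz hw
  obtain ⟨_, ⟨α, β, hα, hβ, hαβ, rfl⟩, hle, k, heq, hlt⟩ :=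
    exists_mem_segment_le_eq_lt (w := fun _ ↦ s / 2) hz hw
  have hform (i : Fin 4) := sqForm1_combo c z w (θ + (i : ℕ) * (π / 2)) hαβ
  exact ⟨θ + (k : ℕ) * (π / 2), (periodic_sqSet c s).nat_mul k θ,
    (periodic_sqVertices c s).nat_mul k θ, α • z + β • w, ⟨α, β, hα, hβ, hαβ, rfl⟩,
    mem_sqSet_iff_forall.2 fun i ↦ (hform i).trans_le (hle i), (hform k).trans heq, hlt⟩

lemma abs_sqForm2_le_of_disjoint_sqVertices {T : Set Pt} (hT : Convex ℝ T)
    (hdisj : Disjoint T (sqVertices c θ s)) (hzT : z ∈ T) (hz : z ∈ sqSet c θ s)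
    (hz' : sqForm1 c θ z = s / 2) (hwT : w ∈ T) (hw : sqForm1 c θ w = s / 2) :
    |sqForm2 c θ w| ≤ s / 2 := by
  let chord : Set ℝ := sqForm2 c θ '' {x ∈ T | sqForm1 c θ x = s / 2}
  have hchord : Convex ℝ chord := by
    rintro _ ⟨x, ⟨hxT, hx⟩, rfl⟩ _ ⟨y, ⟨hyT, hy⟩, rfl⟩ α β hα hβ hαβ
    refine ⟨α • x + β • y, ⟨hT hxT hyT hα hβ hαβ, ?_⟩, sqForm2_combo c x y θ hαβ⟩
    rw [sqForm1_combo c x y θ hαβ, hx, hy, ← add_mul, hαβ, one_mul]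
  have hcorner {y : ℝ} (hy : |y| = s / 2) : y ∉ chord := by
    rintro ⟨x, ⟨hxT, hx⟩, rfl⟩
    refine Set.disjoint_left.1 hdisj hxT ⟨?_, hy⟩
    rw [hx, abs_of_nonneg (half_side_nonneg_of_mem_sqSet hz)]
  have habs : |s / 2| = s / 2 := abs_of_nonneg (half_side_nonneg_of_mem_sqSet hz)
  exact abs_le.2 <| ordConnected_subset_Icc hchord.ordConnected
    (hcorner ((abs_neg _).trans habs)) (hcorner habs)
    ⟨_, ⟨z, ⟨hzT, hz'⟩, rfl⟩, abs_le.1 hz.2⟩ ⟨w, ⟨hwT, hw⟩, rfl⟩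

/-- The vertex of `sqSet c φ s` at which both frame coordinates are minimal. For `φ - θ` between `0`
and `π / 2` it is the deepest vertex of the square in the direction in which `sqForm1 _ θ`
decreases. -/
def sqCorner (c : Pt) (φ s : ℝ) : Pt := sqPoint c φ (-(s / 2)) (-(s / 2))

@[simp]
lemma sqForm1_sqCorner_same (c : Pt) (φ s : ℝ) : sqForm1 c φ (sqCorner c φ s) = -(s / 2) := by
  simp [sqCorner]

@[simp]
lemma sqForm2_sqCorner_same (c : Pt) (φ s : ℝ) : sqForm2 c φ (sqCorner c φ s) = -(s / 2) := by
  simp [sqCorner]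

lemma sqCorner_mem_sqVertices (hs : 0 ≤ s / 2) : sqCorner c φ s ∈ sqVertices c φ s := by
  simp [sqVertices, abs_of_nonneg hs]

lemma sqForm1_eq_sqCorner_add (o c z : Pt) (θ φ s : ℝ) :
    sqForm1 o θ z = sqForm1 o θ (sqCorner c φ s) +
      (cos (φ - θ) * (sqForm1 c φ z + s / 2) + sin (φ - θ) * (sqForm2 c φ z + s / 2)) := by
  conv_lhs => rw [← sqPoint_sqForm c z φ]
  rw [sqCorner, sqForm1_sqPoint, sqForm1_sqPoint, ← neg_sub φ θ, cos_neg, sin_neg]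
  ring

lemma sqPoint_sqCorner_mem_sqSet_iff {x y : ℝ} :
    sqPoint (sqCorner c φ s) θ x y ∈ sqSet c φ s ↔
      cos (φ - θ) * x - sin (φ - θ) * y ∈ Set.Icc 0 s ∧
        sin (φ - θ) * x + cos (φ - θ) * y ∈ Set.Icc 0 s := by
  have hIcc (r : ℝ) : |-(s / 2) + r| ≤ s / 2 ↔ r ∈ Set.Icc 0 s := by
    rw [abs_le, Set.mem_Icc]
    constructor <;> rintro ⟨_, _⟩ <;> constructor <;> linarith
  simp only [sqSet, Set.mem_ofPred_eq, sqForm1_sqPoint, sqForm2_sqPoint,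
    sqForm1_sqCorner_same, sqForm2_sqCorner_same, hIcc]

/-- The two directions at angle `π / 4` to a direction inside the right angle at the corner cannot
both point out of that right angle. -/
lemma sqPoint_sqCorner_mem_sqSet {t : ℝ} (hcos : 0 ≤ cos (φ - θ)) (hsin : 0 ≤ sin (φ - θ))
    (ht₀ : 0 ≤ t) (ht : (cos (φ - θ) + sin (φ - θ)) * t ≤ s) :
    sqPoint (sqCorner c φ s) θ t 0 ∈ sqSet c φ s ∧
      (sqPoint (sqCorner c φ s) θ t t ∈ sqSet c φ s ∨
        sqPoint (sqCorner c φ s) θ t (-t) ∈ sqSet c φ s) := by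
  have hcos_t := mul_nonneg hcos ht₀
  have hsin_t := mul_nonneg hsin ht₀
  simp only [sqPoint_sqCorner_mem_sqSet_iff, Set.mem_Icc]
  refine ⟨⟨⟨?_, ?_⟩, ?_, ?_⟩, ?_⟩
  iterate 4 linarith
  obtain hle | hle := le_total (sin (φ - θ)) (cos (φ - θ))
  · have hle_t := mul_le_mul_of_nonneg_right hle ht₀
    left
    refine ⟨⟨?_, ?_⟩, ?_, ?_⟩ <;> linarith
  · have hle_t := mul_le_mul_of_nonneg_right hle ht₀
    right
    refine ⟨⟨?_, ?_⟩, ?_, ?_⟩ <;> linarith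

lemma exists_angle_mem_Ico (c : Pt) (φ s θ : ℝ) :
    ∃ φ' ∈ Set.Ico θ (θ + π / 2),
      sqSet c φ' s = sqSet c φ s ∧ sqVertices c φ' s = sqVertices c φ s :=
  ⟨toIcoMod pi_div_two_pos θ φ, toIcoMod_mem_Ico pi_div_two_pos θ φ,
    (periodic_sqSet c s).sub_zsmul_eq _, (periodic_sqVertices c s).sub_zsmul_eq _⟩

lemma exists_mem_sqVertices_foot_mem (o : Pt) (θ : ℝ) (hz : z ∈ sqSet c φ s)
    (hzc : sqForm1 o θ z ≤ sqForm1 o θ c) :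
    ∃ v ∈ sqVertices c φ s, ∃ t, 0 ≤ t ∧ sqForm1 o θ v + t = sqForm1 o θ z ∧
      sqPoint v θ t 0 ∈ sqSet c φ s ∧
      (sqPoint v θ t t ∈ sqSet c φ s ∨ sqPoint v θ t (-t) ∈ sqSet c φ s) := by
  obtain ⟨ψ, ⟨hθψ, hψθ⟩, hset, hvertices⟩ := exists_angle_mem_Ico c φ s θ
  rw [← hset] at hz ⊢
  rw [← hvertices]
  have hcos : 0 ≤ cos (ψ - θ) := cos_nonneg_of_mem_Icc ⟨by linarith [pi_pos], by linarith⟩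
  have hsin : 0 ≤ sin (ψ - θ) :=
    sin_nonneg_of_nonneg_of_le_pi (by linarith) (by linarith [pi_pos])
  have hs := half_side_nonneg_of_mem_sqSet hz
  have hdepth := sqForm1_eq_sqCorner_add o c z θ ψ s
  have hdepth_center := sqForm1_eq_sqCorner_add o c c θ ψ s
  rw [sqForm1_self, sqForm2_self, zero_add, ← add_mul] at hdepth_center
  set t := cos (ψ - θ) * (sqForm1 c ψ z + s / 2) + sin (ψ - θ) * (sqForm2 c ψ z + s / 2)
  have ht₀ : 0 ≤ t := add_nonneg (mul_nonneg hcos (by linarith [(abs_le.1 hz.1).1]))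
    (mul_nonneg hsin (by linarith [(abs_le.1 hz.2).1]))
  have ht : (cos (ψ - θ) + sin (ψ - θ)) * t ≤ s := calc
    _ ≤ (cos (ψ - θ) + sin (ψ - θ)) * ((cos (ψ - θ) + sin (ψ - θ)) * (s / 2)) :=
      mul_le_mul_of_nonneg_left (by linarith) (add_nonneg hcos hsin)
    _ ≤ s := by
      linear_combination s * sin_sq_add_cos_sq (ψ - θ) +
        mul_nonneg hs (sq_nonneg (cos (ψ - θ) - sin (ψ - θ)))
  exact ⟨sqCorner c ψ s, sqCorner_mem_sqVertices hs, t, ht₀, hdepth.symm,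
    sqPoint_sqCorner_mem_sqSet hcos hsin ht₀ ht⟩

end Square

lemma center_mem_sqSet_of_disjoint_sqVertices {cR cS : Pt} {θR θS sR sS : ℝ}
    (hne : (sqSet cR θR sR ∩ sqSet cS θS sS).Nonempty)
    (hR : Disjoint (sqSet cS θS sS) (sqVertices cR θR sR))
    (hS : Disjoint (sqSet cR θR sR) (sqVertices cS θS sS)) :
    cS ∈ sqSet cR θR sR := by
  by_contra hcS
  obtain ⟨x, hxR, hxS⟩ := hne
  obtain ⟨θ, hset, hvertices, z, hxz, hzR, hz, hbeyond⟩ := exists_mem_segment_mem_side hxR hcS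
  rw [← hset] at hzR hS
  rw [← hvertices] at hR
  have hcenter := center_mem_sqSet (c := cS) (θ := θS) (half_side_nonneg_of_mem_sqSet hxS)
  have hzS : z ∈ sqSet cS θS sS := (convex_sqSet cS θS sS).segment_subset hxS hcenter hxz
  obtain ⟨v, hv, t, ht, hvt, hfoot, hfar⟩ :=
    exists_mem_sqVertices_foot_mem cR θ hzS (hz.trans_le hbeyond.le)
  have hchord {y : ℝ} (hy : sqPoint v θ t y ∈ sqSet cS θS sS) :
      |sqForm2 cR θ v + y| ≤ sR / 2 := by
    rw [← sqForm2_sqPoint_same cR v θ t]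
    refine abs_sqForm2_le_of_disjoint_sqVertices (convex_sqSet cS θS sS) hR hzS hzR hz hy ?_
    rw [sqForm1_sqPoint_same, hvt, hz]
  have hfoot_side : |sqForm2 cR θ v| ≤ sR / 2 := by simpa only [add_zero] using hchord hfoot
  have ht_side : t ≤ sR := by
    have hfoot_bounds := abs_le.1 hfoot_side
    obtain hfar | hfar := hfar
    · linarith [(abs_le.1 (hchord hfar)).2]
    · linarith [(abs_le.1 (hchord hfar)).1]
  have hvR : v ∈ sqSet cR θ sR := ⟨abs_le.2 ⟨by linarith, by linarith⟩, hfoot_side⟩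
  exact Set.disjoint_left.1 hS hvR hv

theorem stmt_12 (cR cS : Pt) (θR θS sR sS : ℝ) (hR : 0 < sR) (hS : 0 < sS)
    (hne : (sqSet cR θR sR ∩ sqSet cS θS sS).Nonempty)
    (hv : (sqSet cR θR sR ∩ sqSet cS θS sS) ∩
      (sqVertices cR θR sR ∪ sqVertices cS θS sS) = ∅) :
    cR ∈ sqSet cS θS sS ∧ cS ∈ sqSet cR θR sR := by
  obtain ⟨hvR, hvS⟩ := Set.disjoint_union_right.1 (Set.disjoint_iff_inter_eq_empty.2 hv)
  have hSR : Disjoint (sqSet cS θS sS) (sqVertices cR θR sR) :=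
    Set.disjoint_left.2 fun x hx hxv ↦ Set.disjoint_left.1 hvR ⟨⟨hxv.1.le, hxv.2.le⟩, hx⟩ hxv
  have hRS : Disjoint (sqSet cR θR sR) (sqVertices cS θS sS) :=
    Set.disjoint_left.2 fun x hx hxv ↦ Set.disjoint_left.1 hvS ⟨hx, hxv.1.le, hxv.2.le⟩ hxv
  exact ⟨center_mem_sqSet_of_disjoint_sqVertices (Set.inter_comm _ _ ▸ hne) hRS hSR,
    center_mem_sqSet_of_disjoint_sqVertices hne hSR hRS⟩
end
end

section
/- If C is a finite family of (possibly rotated) squares of arbitrary sizes in the plane, then τ(C) ≤ 10·ν(C). -/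
open Classical MeasureTheory
noncomputable section

/-! Among the squares of a family choose a smallest one, `Q`. All squares of the family that meet
`Q` can be hit by ten points, so choosing `Q` for the packing, discarding the squares that meet it
and repeating the procedure uses at most ten points per chosen square.

To find the ten points, use the frame of `Q`, scaled so that `Q = [-7, 7]²`; the points are then
Gaussian integers. If a square `S` meets `Q` at `z` and misses a point `P`, one of the four sides
of `S` separates `P` from `z`. Only few combinations of separating sides for two points are
compatible with `z ∈ Q` and with `S` being at least as large as `Q`, and on each of seven ranges of
the direction of `S` a backtracking search shows that no choice of one side for each of the ten
points is free of conflicts. -/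

/-! ### Hitting degeneracy bounds the hitting number by the packing number -/

section HittingDegeneracy

variable {F G : Finset (Set Pt)} {S : Set Pt} {t : ℕ}

lemma hitNum_le_card {H : Finset Pt} (h : Hits H F) : hitNum F ≤ H.card :=
  Nat.sInf_le ⟨H, rfl, h⟩

lemma exists_hits_card_eq_hitNum (hF : ∀ S ∈ F, S.Nonempty) :
    ∃ H : Finset Pt, H.card = hitNum F ∧ Hits H F := by
  choose! p hp using hF
  have himage : Hits (F.image p) F := fun S hS => ⟨p S, Finset.mem_image_of_mem p hS, hp S hS⟩
  exact Nat.sInf_mem (s := {n | ∃ H : Finset Pt, H.card = n ∧ Hits H F}) ⟨_, _, rfl, himage⟩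

lemma hitNum_union_le (hF : ∀ S ∈ F, S.Nonempty) (hG : ∀ S ∈ G, S.Nonempty) :
    hitNum (F ∪ G) ≤ hitNum F + hitNum G := by
  obtain ⟨H, hHcard, hH⟩ := exists_hits_card_eq_hitNum hF
  obtain ⟨K, hKcard, hK⟩ := exists_hits_card_eq_hitNum hG
  have hHK : Hits (H ∪ K) (F ∪ G) := by
    intro S hS
    rcases Finset.mem_union.1 hS with hS | hS
    · obtain ⟨p, hp, hpS⟩ := hH S hS
      exact ⟨p, Finset.mem_union_left K hp, hpS⟩
    · obtain ⟨p, hp, hpS⟩ := hK S hS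
      exact ⟨p, Finset.mem_union_right H hp, hpS⟩
  calc hitNum (F ∪ G) ≤ (H ∪ K).card := hitNum_le_card hHK
    _ ≤ H.card + K.card := Finset.card_union_le H K
    _ = hitNum F + hitNum G := by rw [hHcard, hKcard]

lemma bddAbove_packing_card (F : Finset (Set Pt)) :
    BddAbove {n | ∃ P ⊆ F, P.card = n ∧ (P : Set (Set Pt)).Pairwise Disjoint} :=
  ⟨F.card, by rintro _ ⟨P, hP, rfl, -⟩; exact Finset.card_le_card hP⟩

lemma card_le_packNum {P : Finset (Set Pt)} (hPF : P ⊆ F)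
    (hP : (P : Set (Set Pt)).Pairwise Disjoint) : P.card ≤ packNum F :=
  le_csSup (bddAbove_packing_card F) ⟨P, hPF, rfl, hP⟩

lemma exists_packing_card_eq_packNum (F : Finset (Set Pt)) :
    ∃ P ⊆ F, P.card = packNum F ∧ (P : Set (Set Pt)).Pairwise Disjoint :=
  Nat.sSup_mem (s := {n | ∃ P ⊆ F, P.card = n ∧ (P : Set (Set Pt)).Pairwise Disjoint})
    ⟨0, ∅, Finset.empty_subset F, rfl, by simp⟩ (bddAbove_packing_card F)

lemma packNum_filter_disjoint_add_one_le (hS : S ∈ F) (hne : S.Nonempty) :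
    packNum (F.filter (Disjoint S)) + 1 ≤ packNum F := by
  obtain ⟨P, hPF, hcard, hP⟩ := exists_packing_card_eq_packNum (F.filter (Disjoint S))
  have hSP : ∀ T ∈ P, Disjoint S T := fun T hT => (Finset.mem_filter.1 (hPF hT)).2
  have hSnotMem : S ∉ P := fun h => hne.ne_empty (disjoint_self.1 (hSP S h))
  rw [← hcard, ← Finset.card_insert_of_notMem hSnotMem]
  refine card_le_packNum (Finset.insert_subset hS (hPF.trans (Finset.filter_subset _ F))) ?_
  rw [Finset.coe_insert]
  exact hP.insert fun T hT _ => ⟨hSP T hT, (hSP T hT).symm⟩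

lemma HitDeg.mono (h : HitDeg t F) (hGF : G ⊆ F) : HitDeg t G :=
  fun F' hF' => h F' (hF'.trans hGF)

theorem HitDeg.hitNum_le_mul_packNum (h : HitDeg t F) (hne : ∀ S ∈ F, S.Nonempty) :
    hitNum F ≤ t * packNum F := by
  induction F using Finset.strongInduction with
  | H F ih =>
    rcases F.eq_empty_or_nonempty with rfl | hF
    · exact (hitNum_le_card (H := ∅) (by simp [Hits])).trans (Nat.zero_le _)
    obtain ⟨S, hS, ht⟩ := h F Finset.Subset.rfl hF
    set near := F.filter fun T => (T ∩ S).Nonempty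
    set far := F.filter (Disjoint S)
    have hfar : far ⊂ F := Finset.filter_ssubset.2
      ⟨S, hS, fun hd => (hne S hS).ne_empty (disjoint_self.1 hd)⟩
    have hunion : F = near ∪ far := by
      rw [← Finset.filter_or, Finset.filter_true_of_mem]
      intro T _
      rw [Set.inter_comm, ← Set.not_disjoint_iff_nonempty_inter]
      exact (Classical.em _).symm
    have hfar_le := ih far hfar (h.mono hfar.subset) fun T hT => hne T (hfar.subset hT)
    calc hitNum F = hitNum (near ∪ far) := by rw [← hunion]
      _ ≤ hitNum near + hitNum far := hitNum_union_le
          (fun T hT => hne T (Finset.filter_subset _ F hT)) fun T hT => hne T (hfar.subset hT)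
      _ ≤ t + t * packNum far := Nat.add_le_add ht hfar_le
      _ = t * (packNum far + 1) := by ring
      _ ≤ t * packNum F :=
          Nat.mul_le_mul_left t (packNum_filter_disjoint_add_one_le hS (hne S hS))

end HittingDegeneracy

/-! ### Binary quadratic forms on cones -/

section Cones

/-- The closed cone spanned by two Gaussian integers. -/
def gaussCone (g h : GaussianInt) : Set ℂ :=
  {e | ∃ a b : ℝ, 0 ≤ a ∧ 0 ≤ b ∧ e = a * g + b * h}

/-- The `k`-th of `N + 1` directions dividing the closed first quadrant into `N` cones. -/
def quadrantRay (N k : ℕ) : GaussianInt := ⟨N - k, k⟩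

lemma exists_mem_gaussCone_quadrantRay {N : ℕ} (hN : 0 < N) {e : ℂ} (hre : 0 < e.re)
    (him : 0 ≤ e.im) : ∃ k < N, e ∈ gaussCone (quadrantRay N k) (quadrantRay N (k + 1)) := by
  have : (0 : ℝ) < N := by exact_mod_cast hN
  set σ := e.re + e.im with hσ
  have hσpos : 0 < σ := by positivity
  set τ := N * e.im / σ
  have hτ : τ * σ = N * e.im := div_mul_cancel₀ _ hσpos.ne'
  have hτN : τ < N := (div_lt_iff₀ hσpos).2 (by gcongr; linarith)
  have hfloor : ⌊τ⌋₊ ≤ τ := Nat.floor_le (by positivity)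
  have hfloor' : τ < ⌊τ⌋₊ + 1 := Nat.lt_floor_add_one τ
  refine ⟨⌊τ⌋₊, by exact_mod_cast hfloor.trans_lt hτN, (⌊τ⌋₊ + 1 - τ) * (σ / N),
    (τ - ⌊τ⌋₊) * (σ / N), mul_nonneg (by linarith) (by positivity),
    mul_nonneg (by linarith) (by positivity), Complex.ext ?_ ?_⟩
  · simp only [quadrantRay, Complex.add_re, Complex.re_ofReal_mul, ← GaussianInt.intCast_re]
    push_cast
    field_simp
    linear_combination hτ - N * hσ
  · simp only [quadrantRay, Complex.add_im, Complex.im_ofReal_mul, ← GaussianInt.intCast_im]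
    push_cast
    field_simp
    linear_combination -hτ

/-- A certificate that the quadratic form `A x² + B x y + D y²` is nonpositive on the cone spanned
by `g` and `h`: its values and its polar form at the generators are nonpositive. -/
def NonposOnCone (g h : GaussianInt) (A B D : ℤ) : Prop :=
  A * g.re ^ 2 + B * (g.re * g.im) + D * g.im ^ 2 ≤ 0 ∧
  A * h.re ^ 2 + B * (h.re * h.im) + D * h.im ^ 2 ≤ 0 ∧
  2 * A * (g.re * h.re) + B * (g.re * h.im + g.im * h.re) + 2 * D * (g.im * h.im) ≤ 0

instance (g h : GaussianInt) (A B D : ℤ) : Decidable (NonposOnCone g h A B D) :=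
  inferInstanceAs (Decidable (_ ∧ _ ∧ _))

lemma NonposOnCone.nonpos {g h : GaussianInt} {A B D : ℤ} (hq : NonposOnCone g h A B D) {e : ℂ}
    (he : e ∈ gaussCone g h) : A * e.re ^ 2 + B * (e.re * e.im) + D * e.im ^ 2 ≤ 0 := by
  obtain ⟨a, b, ha, hb, rfl⟩ := he
  obtain ⟨hg, hh, hgh⟩ := hq
  rify at hg hh hgh
  simp only [Complex.add_re, Complex.add_im, Complex.re_ofReal_mul, Complex.im_ofReal_mul,
    ← GaussianInt.intCast_re, ← GaussianInt.intCast_im]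
  linarith [mul_nonpos_of_nonneg_of_nonpos (sq_nonneg a) hg,
    mul_nonpos_of_nonneg_of_nonpos (sq_nonneg b) hh,
    mul_nonpos_of_nonneg_of_nonpos (mul_nonneg ha hb) hgh]

end Cones

/-! ### Squares and their separating sides -/

section Separation

/-- The closed axis-parallel square of half side `ρ` centred at `0`. -/
def centeredSquare (ρ : ℝ) : Set ℂ := {z | |z.re| ≤ ρ ∧ |z.im| ≤ ρ}

/-- The closed square of half side `ρ` with centre `μ` that multiplication by the unit `e` makes
axis-parallel. -/
def tiltedSquare (e μ : ℂ) (ρ : ℝ) : Set ℂ := {z | e * (z - μ) ∈ centeredSquare ρ}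

lemma ofReal_mul_mem_centeredSquare_iff {r ρ : ℝ} (hr : 0 < r) {z : ℂ} :
    r * z ∈ centeredSquare (r * ρ) ↔ z ∈ centeredSquare ρ := by
  simp only [centeredSquare, Set.mem_ofPred_eq, Complex.re_ofReal_mul, Complex.im_ofReal_mul,
    abs_mul, abs_of_pos hr, mul_le_mul_iff_right₀ hr]

lemma ofReal_mul_mem_tiltedSquare_iff {r ρ : ℝ} (hr : 0 < r) {e μ z : ℂ} :
    r * z ∈ tiltedSquare e (r * μ) (r * ρ) ↔ z ∈ tiltedSquare e μ ρ := by
  simp only [tiltedSquare, Set.mem_ofPred_eq, ← mul_sub, mul_left_comm e,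
    ofReal_mul_mem_centeredSquare_iff hr]

@[simp] lemma toComplex_sqrtd : ((Zsqrtd.sqrtd : GaussianInt) : ℂ) = Complex.I := by
  simp [GaussianInt.toComplex_def]

/-- The four units of the Gaussian integers, which index the sides of a square. -/
def quarterTurns : List GaussianInt := [1, Zsqrtd.sqrtd, -1, -Zsqrtd.sqrtd]

lemma mem_centeredSquare_iff_forall_quarterTurns {ρ : ℝ} {z : ℂ} :
    z ∈ centeredSquare ρ ↔ ∀ ε ∈ quarterTurns, (ε * z).re ≤ ρ := by
  simp only [centeredSquare, quarterTurns, abs_le, Set.mem_ofPred_eq, List.forall_mem_cons,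
    List.not_mem_nil, IsEmpty.forall_iff, implies_true, and_true, map_neg, map_one,
    toComplex_sqrtd, one_mul, neg_mul, Complex.neg_re, Complex.I_mul_re, neg_neg]
  grind

lemma quarterTurn_mul_mem_centeredSquare {ρ : ℝ} {ε : GaussianInt} {z : ℂ}
    (hε : ε ∈ quarterTurns) (hz : z ∈ centeredSquare ρ) : ε * z ∈ centeredSquare ρ := by
  simp only [quarterTurns, List.mem_cons, List.not_mem_nil, or_false] at hε
  rcases hε with rfl | rfl | rfl | rfl <;>
    simpa [centeredSquare, and_comm] using hz

/-- A point together with a quarter turn indexing the side of a square beyond which the point is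
supposed to lie. -/
structure Cut where
  dir : GaussianInt
  pt : GaussianInt

/-- The point of the cut in the frame of its direction. -/
def Cut.turned (K : Cut) : GaussianInt := K.dir * K.pt

/-- The point of the cut lies strictly beyond the side, indexed by the cut, of the square with
parameters `e`, `μ`, `ρ`. -/
def Cut.Separates (K : Cut) (e μ : ℂ) (ρ : ℝ) : Prop :=
  K.dir ∈ quarterTurns ∧ ρ < (e * (K.dir * (K.pt - μ))).re

variable {K L : Cut} {e μ z : ℂ} {B : ℝ}

lemma exists_separates_of_notMem_tiltedSquare {P : GaussianInt} (h : (P : ℂ) ∉ tiltedSquare e μ B) :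
    ∃ ε ∈ quarterTurns, Cut.Separates ⟨ε, P⟩ e μ B := by
  rw [tiltedSquare, Set.mem_ofPred_eq, mem_centeredSquare_iff_forall_quarterTurns] at h
  push Not at h
  obtain ⟨ε, hε, hlt⟩ := h
  exact ⟨ε, hε, hε, by rwa [mul_left_comm] at hlt⟩

lemma Cut.Separates.re_lt (hK : K.Separates e μ B) (hz : z ∈ tiltedSquare e μ B) :
    (e * (K.dir * z)).re < (e * K.turned).re := by
  obtain ⟨hdir, hlt⟩ := hK
  have hle : (K.dir * (e * (z - μ))).re ≤ B :=
    mem_centeredSquare_iff_forall_quarterTurns.1 hz K.dir hdir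
  have hsplit : e * K.turned - e * (K.dir * z) =
      e * (K.dir * (K.pt - μ)) - K.dir * (e * (z - μ)) := by
    rw [Cut.turned, GaussianInt.toComplex_mul]
    ring
  have := congrArg Complex.re hsplit
  simp only [Complex.sub_re] at this
  linarith

end Separation

/-! ### Conflicts between separating sides -/

section Conflicts

variable {g h : GaussianInt} {K L : Cut} {e μ z : ℂ} {ρ : ℤ} {B : ℝ}

lemma re_sq_add_im_sq_eq_one (he : ‖e‖ = 1) : e.re ^ 2 + e.im ^ 2 = 1 := by
  rw [← one_pow 2, ← he, Complex.sq_norm, Complex.normSq_apply, sq, sq]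

/-- A certificate that the cut separates no square with direction in the cone spanned by `g` and
`h` that meets `[-ρ, ρ]²`. -/
def Cut.Impossible (ρ : ℤ) (g h : GaussianInt) (K : Cut) : Prop :=
  NonposOnCone g h (K.turned.re + ρ) (ρ - K.turned.im) 0

/-- A certificate that no square of half side at least `ρ`, with direction in the cone spanned by
`g` and `h`, has the points of the two cuts beyond two opposite sides. -/
def Cut.Opposed (ρ : ℤ) (g h : GaussianInt) (K L : Cut) : Prop :=
  L.dir = -K.dir ∧
    NonposOnCone g h ((K.turned + L.turned).re ^ 2 - 4 * ρ ^ 2)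
      (-2 * ((K.turned + L.turned).re * (K.turned + L.turned).im))
      ((K.turned + L.turned).im ^ 2 - 4 * ρ ^ 2)

/-- A certificate that no square with direction in the cone spanned by `g` and `h` that meets
`[-ρ, ρ]²` has the points of the two cuts beyond two consecutive sides. -/
def Cut.Cornered (ρ : ℤ) (g h : GaussianInt) (K L : Cut) : Prop :=
  L.dir = Zsqrtd.sqrtd * K.dir ∧
    NonposOnCone g h (L.turned.re + ρ) (K.turned.re - L.turned.im) (ρ - K.turned.im)

/-- A certificate that no square of half side at least `ρ`, with direction in the cone spanned by
`g` and `h`, that meets `[-ρ, ρ]²` is separated by both cuts. -/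
def Cut.Clashes (ρ : ℤ) (g h : GaussianInt) (K L : Cut) : Prop :=
  K.Opposed ρ g h L ∨ K.Cornered ρ g h L ∨ L.Cornered ρ g h K

instance (ρ : ℤ) (g h : GaussianInt) (K : Cut) : Decidable (K.Impossible ρ g h) :=
  inferInstanceAs (Decidable (NonposOnCone ..))

instance (ρ : ℤ) (g h : GaussianInt) (K L : Cut) : Decidable (K.Opposed ρ g h L) :=
  inferInstanceAs (Decidable (_ ∧ NonposOnCone ..))

instance (ρ : ℤ) (g h : GaussianInt) (K L : Cut) : Decidable (K.Cornered ρ g h L) :=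
  inferInstanceAs (Decidable (_ ∧ NonposOnCone ..))

instance (ρ : ℤ) (g h : GaussianInt) (K L : Cut) : Decidable (K.Clashes ρ g h L) :=
  inferInstanceAs (Decidable (_ ∨ _ ∨ _))

lemma Cut.Impossible.not_separates (hK : K.Impossible ρ g h) (he : e ∈ gaussCone g h)
    (hre : 0 < e.re) (him : 0 ≤ e.im) (hz : z ∈ centeredSquare ρ)
    (hzS : z ∈ tiltedSquare e μ B) : ¬ K.Separates e μ B := by
  intro hsep
  have hlt := hsep.re_lt hzS
  obtain ⟨hwre, hwim⟩ := quarterTurn_mul_mem_centeredSquare hsep.1 hz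
  have hq := hK.nonpos he
  set w := (K.dir : ℂ) * z
  simp only [Complex.mul_re e, ← GaussianInt.intCast_re, ← GaussianInt.intCast_im] at hlt
  push_cast at hq
  have hwre' := mul_le_mul_of_nonneg_left (neg_le_of_abs_le hwre) hre.le
  have hwim' := mul_le_mul_of_nonneg_left (le_of_abs_le hwim) him
  have hpos : 0 < e.re * (K.turned.re + ρ) + e.im * (ρ - K.turned.im) := by linarith
  -- The certificate is about `e.re` times this linear form.
  linarith [mul_pos hre hpos]

lemma Cut.Opposed.not_separates (hKL : K.Opposed ρ g h L) (he : e ∈ gaussCone g h)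
    (hnorm : ‖e‖ = 1) (hρ : 0 ≤ ρ) (hρB : ρ ≤ B) (hK : K.Separates e μ B) :
    ¬ L.Separates e μ B := by
  rintro ⟨-, hL⟩
  obtain ⟨hdir, hcert⟩ := hKL
  have hq := hcert.nonpos he
  have hunit := re_sq_add_im_sq_eq_one hnorm
  have hsum : e * ((K.turned + L.turned : GaussianInt) : ℂ) =
      e * (K.dir * (K.pt - μ)) + e * (L.dir * (L.pt - μ)) := by
    simp only [Cut.turned, hdir, map_add, map_mul, map_neg]
    ring
  have hgap : 2 * B < (e * ((K.turned + L.turned : GaussianInt) : ℂ)).re := by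
    rw [hsum, Complex.add_re]
    linarith [hK.2]
  rw [Complex.mul_re, ← GaussianInt.intCast_re, ← GaussianInt.intCast_im] at hgap
  set x := (K.turned + L.turned).re
  set y := (K.turned + L.turned).im
  push_cast at hq
  have : (0 : ℝ) ≤ ρ := by exact_mod_cast hρ
  have hsq : (e.re * x - e.im * y) ^ 2 ≤ (2 * ρ) ^ 2 := by
    linear_combination hq + 4 * (ρ : ℝ) ^ 2 * hunit
  linarith [(abs_le_of_sq_le_sq' hsq (by positivity)).2]

lemma Cut.Cornered.not_separates (hKL : K.Cornered ρ g h L) (he : e ∈ gaussCone g h)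
    (hnorm : ‖e‖ = 1) (hre : 0 < e.re) (him : 0 ≤ e.im) (hz : z ∈ centeredSquare ρ)
    (hzS : z ∈ tiltedSquare e μ B) (hK : K.Separates e μ B) : ¬ L.Separates e μ B := by
  intro hL
  obtain ⟨hdir, hcert⟩ := hKL
  have hq := hcert.nonpos he
  have hunit := re_sq_add_im_sq_eq_one hnorm
  have hKlt := hK.re_lt hzS
  have hLlt := hL.re_lt hzS
  obtain ⟨-, hwim⟩ := quarterTurn_mul_mem_centeredSquare hK.1 hz
  rw [hdir, GaussianInt.toComplex_mul, toComplex_sqrtd, mul_assoc Complex.I] at hLlt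
  set w := (K.dir : ℂ) * z
  simp only [Complex.mul_re, Complex.mul_im, Complex.I_re, Complex.I_im, ← GaussianInt.intCast_re,
    ← GaussianInt.intCast_im] at hKlt hLlt
  push_cast at hq
  -- Adding `e.im` times the first and `e.re` times the second inequality eliminates `w.re`.
  have hKmul := mul_le_mul_of_nonneg_left hKlt.le him
  have hLmul := mul_lt_mul_of_pos_left hLlt hre
  have hpos : 0 < (L.turned.re + ρ) * e.re ^ 2 + (K.turned.re - L.turned.im) * (e.re * e.im) +
      (ρ - K.turned.im) * e.im ^ 2 := by
    linear_combination hKmul + hLmul + le_of_abs_le hwim + (w.im - ρ) * hunit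
  exact hpos.not_ge hq

lemma Cut.Clashes.not_separates (hKL : K.Clashes ρ g h L) (he : e ∈ gaussCone g h)
    (hnorm : ‖e‖ = 1) (hre : 0 < e.re) (him : 0 ≤ e.im) (hρB : ρ ≤ B) (hz : z ∈ centeredSquare ρ)
    (hzS : z ∈ tiltedSquare e μ B) (hK : K.Separates e μ B) : ¬ L.Separates e μ B := by
  rcases hKL with hopp | hcor | hcor
  · have hρ : (0 : ℝ) ≤ ρ := (abs_nonneg z.re).trans hz.1
    exact hopp.not_separates he hnorm (by exact_mod_cast hρ) hρB hK
  · exact hcor.not_separates he hnorm hre him hz hzS hK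
  · exact fun hL => hcor.not_separates he hnorm hre him hz hzS hL hK

end Conflicts

/-! ### The backtracking search -/

section Search

variable {ρ : ℤ} {g h : GaussianInt} {e μ z : ℂ} {B : ℝ}

/-- The outcome of a backtracking search through all choices of one cut for each of the points
`Ps`: every extension of the cuts `Ks` to all of `Ps` contains an impossible cut or two clashing
ones. -/
def Refuted (ρ : ℤ) (g h : GaussianInt) : List GaussianInt → List Cut → Prop
  | [], _ => False
  | P :: Ps, Ks => ∀ ε ∈ quarterTurns,
      Cut.Impossible ρ g h ⟨ε, P⟩ ∨ (∃ K ∈ Ks, Cut.Clashes ρ g h ⟨ε, P⟩ K) ∨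
        Refuted ρ g h Ps (⟨ε, P⟩ :: Ks)

instance Refuted.decidable (ρ : ℤ) (g h : GaussianInt) :
    (Ps : List GaussianInt) → (Ks : List Cut) → Decidable (Refuted ρ g h Ps Ks)
  | [], _ => inferInstanceAs (Decidable False)
  | P :: Ps, Ks =>
    have (Ks : List Cut) := Refuted.decidable ρ g h Ps Ks
    inferInstanceAs (Decidable (∀ ε ∈ quarterTurns,
      Cut.Impossible ρ g h ⟨ε, P⟩ ∨ (∃ K ∈ Ks, Cut.Clashes ρ g h ⟨ε, P⟩ K) ∨
        Refuted ρ g h Ps (⟨ε, P⟩ :: Ks)))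

lemma Refuted.exists_mem_tiltedSquare {Ps : List GaussianInt} {Ks : List Cut}
    (href : Refuted ρ g h Ps Ks) (he : e ∈ gaussCone g h) (hnorm : ‖e‖ = 1) (hre : 0 < e.re)
    (him : 0 ≤ e.im) (hρB : ρ ≤ B) (hz : z ∈ centeredSquare ρ) (hzS : z ∈ tiltedSquare e μ B)
    (hKs : ∀ K ∈ Ks, K.Separates e μ B) : ∃ P ∈ Ps, (P : ℂ) ∈ tiltedSquare e μ B := by
  induction Ps generalizing Ks with
  | nil => exact href.elim
  | cons P Ps ih =>
    by_cases hP : (P : ℂ) ∈ tiltedSquare e μ B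
    · exact ⟨P, List.mem_cons_self, hP⟩
    obtain ⟨ε, hε, hsep⟩ := exists_separates_of_notMem_tiltedSquare hP
    rcases href ε hε with himp | ⟨K, hK, hclash⟩ | hrest
    · exact (himp.not_separates he hre him hz hzS hsep).elim
    · exact (hclash.not_separates he hnorm hre him hρB hz hzS hsep (hKs K hK)).elim
    · obtain ⟨Q, hQ, hQS⟩ := ih hrest (List.forall_mem_cons.2 ⟨hsep, hKs⟩)
      exact ⟨Q, List.mem_cons_of_mem P hQ, hQS⟩

/-- Ten points hitting every square of half side at least `7` that meets `[-7, 7]²`. The order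
determines the size of the backtracking search. -/
def piercingPoints : List GaussianInt :=
  [⟨12, 12⟩, ⟨16, -1⟩, ⟨9, -9⟩, ⟨-1, 16⟩, ⟨-9, 9⟩, ⟨3, 3⟩, ⟨-12, -12⟩, ⟨-16, 1⟩, ⟨1, -16⟩, ⟨-3, -3⟩]

lemma refuted_piercingPoints :
    ∀ k < 7, Refuted 7 (quadrantRay 7 k) (quadrantRay 7 (k + 1)) piercingPoints [] := by
  decide +kernel

theorem exists_piercingPoint_mem_tiltedSquare (hnorm : ‖e‖ = 1) (hre : 0 < e.re) (him : 0 ≤ e.im)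
    (hB : 7 ≤ B) (hz : z ∈ centeredSquare 7) (hzS : z ∈ tiltedSquare e μ B) :
    ∃ P ∈ piercingPoints, (P : ℂ) ∈ tiltedSquare e μ B := by
  obtain ⟨k, hk, he⟩ := exists_mem_gaussCone_quadrantRay (N := 7) (by norm_num) hre him
  exact (refuted_piercingPoints k hk).exists_mem_tiltedSquare he hnorm hre him
    (by exact_mod_cast hB) (by exact_mod_cast hz) hzS (by simp)

theorem exists_scaled_piercingPoint_mem_tiltedSquare {r : ℝ} (hr : 0 < r) (hnorm : ‖e‖ = 1)
    (hre : 0 < e.re) (him : 0 ≤ e.im) (hB : r * 7 ≤ B) (hz : z ∈ centeredSquare (r * 7))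
    (hzS : z ∈ tiltedSquare e μ B) : ∃ P ∈ piercingPoints, (r * P : ℂ) ∈ tiltedSquare e μ B := by
  have hr' : (r : ℂ) ≠ 0 := Complex.ofReal_ne_zero.2 hr.ne'
  obtain ⟨z, rfl⟩ : ∃ w, z = r * w := ⟨z / r, (mul_div_cancel₀ z hr').symm⟩
  obtain ⟨μ, rfl⟩ : ∃ ν, μ = r * ν := ⟨μ / r, (mul_div_cancel₀ μ hr').symm⟩
  obtain ⟨B, rfl⟩ : ∃ b, B = r * b := ⟨B / r, (mul_div_cancel₀ B hr.ne').symm⟩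
  simp only [ofReal_mul_mem_tiltedSquare_iff hr, ofReal_mul_mem_centeredSquare_iff hr] at hz hzS ⊢
  exact exists_piercingPoint_mem_tiltedSquare hnorm hre him (le_of_mul_le_mul_left hB hr) hz hzS

end Search

/-! ### Squares in the Euclidean plane -/

section Squares

variable {c m p : Pt} {φ θ a b : ℝ}

/-- The coordinates of a point in the orthonormal frame of the squares with centre `c` and angle
`φ`. -/
def frame (c : Pt) (φ : ℝ) (p : Pt) : ℂ := ⟨sqForm1 c φ p, sqForm2 c φ p⟩

lemma mem_sqSet_iff_frame : p ∈ sqSet c φ a ↔ frame c φ p ∈ centeredSquare (a / 2) := Iff.rfl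

lemma frame_surjective (c : Pt) (φ : ℝ) : Function.Surjective (frame c φ) := fun ζ =>
  ⟨!₂[c 0 + Real.cos φ * ζ.re + Real.sin φ * ζ.im, c 1 + Real.sin φ * ζ.re - Real.cos φ * ζ.im], by
    apply Complex.ext <;> simp only [frame, sqForm1, sqForm2, Matrix.cons_val_zero,
      Matrix.cons_val_one]
    · linear_combination ζ.re * Real.sin_sq_add_cos_sq φ
    · linear_combination ζ.im * Real.sin_sq_add_cos_sq φ⟩

lemma frame_eq_exp_mul_frame_sub (c m : Pt) (φ θ : ℝ) (p : Pt) :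
    frame m θ p = Complex.exp ((θ - φ : ℝ) * Complex.I) * (frame c φ p - frame c φ m) := by
  have hunit := Real.sin_sq_add_cos_sq φ
  apply Complex.ext <;>
    simp only [frame, sqForm1, sqForm2, Complex.mul_re, Complex.mul_im, Complex.sub_re,
      Complex.sub_im, Complex.exp_ofReal_mul_I_re, Complex.exp_ofReal_mul_I_im, Real.cos_sub,
      Real.sin_sub]
  · linear_combination (-(Real.cos θ * (p 0 - m 0) + Real.sin θ * (p 1 - m 1))) * hunit
  · linear_combination (-(Real.sin θ * (p 0 - m 0) - Real.cos θ * (p 1 - m 1))) * hunit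

lemma sqSet_periodic (c : Pt) (a : ℝ) : Function.Periodic (sqSet c · a) (Real.pi / 2) := by
  intro φ
  ext p
  have hform1 : sqForm1 c (φ + Real.pi / 2) p = -sqForm2 c φ p := by
    simp only [sqForm1, sqForm2, Real.cos_add_pi_div_two, Real.sin_add_pi_div_two]
    ring
  have hform2 : sqForm2 c (φ + Real.pi / 2) p = sqForm1 c φ p := by
    simp only [sqForm1, sqForm2, Real.cos_add_pi_div_two, Real.sin_add_pi_div_two]
    ring
  simp only [sqSet, Set.mem_ofPred_eq, hform1, hform2, abs_neg, and_comm]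

lemma exists_sqSet_eq_and_cos_pos_and_sin_nonneg (m : Pt) (θ b φ : ℝ) :
    ∃ ψ, sqSet m θ b = sqSet m ψ b ∧ 0 < Real.cos (ψ - φ) ∧ 0 ≤ Real.sin (ψ - φ) := by
  obtain ⟨ψ, ⟨hφψ, hψφ⟩, hψ⟩ := (sqSet_periodic m b).exists_mem_Ico (by positivity) θ φ
  exact ⟨ψ, hψ,
    Real.cos_pos_of_mem_Ioo ⟨by linarith [Real.pi_pos], by linarith⟩,
    Real.sin_nonneg_of_nonneg_of_le_pi (by linarith) (by linarith [Real.pi_pos])⟩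

lemma IsSquareSet.nonempty {S : Set Pt} (hS : IsSquareSet S) : S.Nonempty := by
  obtain ⟨c, φ, a, ha, rfl⟩ := hS
  exact ⟨c, by simp [sqSet, sqForm1, sqForm2, (half_pos ha).le]⟩

lemma mem_sqSet_iff_frame_mem_tiltedSquare (c : Pt) (φ : ℝ) :
    p ∈ sqSet m θ b ↔
      frame c φ p ∈ tiltedSquare (Complex.exp ((θ - φ : ℝ) * Complex.I)) (frame c φ m) (b / 2) := by
  rw [mem_sqSet_iff_frame, frame_eq_exp_mul_frame_sub c, tiltedSquare, Set.mem_ofPred_eq]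

theorem exists_card_le_ten_pierces_larger_squares (c : Pt) (φ : ℝ) (ha : 0 < a) :
    ∃ H : Finset Pt, H.card ≤ 10 ∧ ∀ m θ b, a ≤ b → (sqSet m θ b ∩ sqSet c φ a).Nonempty →
      ∃ p ∈ H, p ∈ sqSet m θ b := by
  obtain ⟨point, hpoint⟩ := (frame_surjective c φ).hasRightInverse
  set r := a / 14 with hr
  refine ⟨piercingPoints.toFinset.image fun P : GaussianInt => point (r * P),
    Finset.card_image_le.trans (List.toFinset_card_le _), ?_⟩
  rintro m θ b hab ⟨q, hqT, hqQ⟩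
  obtain ⟨ψ, hψ, hcos, hsin⟩ := exists_sqSet_eq_and_cos_pos_and_sin_nonneg m θ b φ
  rw [hψ] at hqT ⊢
  have hqQ' : frame c φ q ∈ centeredSquare (r * 7) := by
    rw [show r * 7 = a / 2 by rw [hr]; ring]
    exact mem_sqSet_iff_frame.1 hqQ
  obtain ⟨P, hP, hPT⟩ := exists_scaled_piercingPoint_mem_tiltedSquare (r := r) (by positivity)
    (Complex.norm_exp_ofReal_mul_I (ψ - φ)) (by rwa [Complex.exp_ofReal_mul_I_re])
    (by rwa [Complex.exp_ofReal_mul_I_im]) (B := b / 2) (by linarith) hqQ'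
    ((mem_sqSet_iff_frame_mem_tiltedSquare c φ).1 hqT)
  refine ⟨point (r * P), Finset.mem_image_of_mem _ (List.mem_toFinset.2 hP), ?_⟩
  rwa [mem_sqSet_iff_frame_mem_tiltedSquare c φ, hpoint]

theorem hitDeg_ten_of_forall_isSquareSet {F : Finset (Set Pt)} (hF : ∀ S ∈ F, IsSquareSet S) :
    HitDeg 10 F := by
  intro G hGF hG
  choose! center angle side hside hS using fun S hS => hF S (hGF hS)
  obtain ⟨Q, hQ, hmin⟩ := G.exists_min_image side hG
  obtain ⟨H, hcard, hH⟩ :=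
    exists_card_le_ten_pierces_larger_squares (center Q) (angle Q) (hside Q hQ)
  refine ⟨Q, hQ, (hitNum_le_card fun T hT => ?_).trans hcard⟩
  obtain ⟨hTG, hTQ⟩ := Finset.mem_filter.1 hT
  rw [hS T hTG, hS Q hQ] at hTQ
  obtain ⟨p, hp, hpT⟩ := hH _ _ _ (hmin T hTG) hTQ
  exact ⟨p, hp, by rwa [hS T hTG]⟩

end Squares

theorem stmt_15 (C : Finset (Set Pt)) (h : ∀ S ∈ C, IsSquareSet S) :
    hitNum C ≤ 10 * packNum C := by
  have hdeg : HitDeg 10 C := hitDeg_ten_of_forall_isSquareSet h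
  exact hdeg.hitNum_le_mul_packNum fun S hS => (h S hS).nonempty
end
end

section
/- There exists a family of 9 pairwise intersecting unit squares in the plane (so ν = 1) that cannot be hit by fewer than 3 points, i.e., τ = 3. -/
open Classical MeasureTheory
noncomputable section

/-!
Consider squares `A 0`, `A 1`, `A 2` and, for each `k`, a group of squares `B k i` without a common
point, all of them disjoint from `A (k + 1) ∩ A (k + 2)`. If two points hit all squares, then by
pigeonhole one of them lies in `A (k + 1) ∩ A (k + 2)` for some `k`, so the other one lies in every
`B k i`, which is impossible. Such squares can pairwise intersect: put them around the origin with
an approximate threefold symmetry, and let `A k` be one of the three members of the group `B k`.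
The angles of the 3-4-5 triangle then make every condition a finite computation with integers.
-/

section Combinatorics

variable {α ι : Type*}

theorem exists_map_add_one_eq_map_add_two {H : Finset α} (hH : H.card < 3) {a : Fin 3 → α}
    (ha : ∀ k, a k ∈ H) : ∃ k, a (k + 1) = a (k + 2) := by
  obtain ⟨i, -, j, -, hij, heq⟩ :=
    Finset.exists_ne_map_eq_of_card_lt_of_maps_to (s := Finset.univ) (by simpa using hH)
      fun k _ => ha k
  have cyclic : ∀ i j : Fin 3, i ≠ j →
      ∃ k, i = k + 1 ∧ j = k + 2 ∨ i = k + 2 ∧ j = k + 1 := by decide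
  obtain ⟨k, ⟨rfl, rfl⟩ | ⟨rfl, rfl⟩⟩ := cyclic i j hij
  exacts [⟨k, heq⟩, ⟨k, heq.symm⟩]

theorem three_le_card_of_hits {A : Fin 3 → Set α} {B : Fin 3 → ι → Set α}
    (hAB : ∀ k i, Disjoint (A (k + 1) ∩ A (k + 2)) (B k i)) (hBB : ∀ k, ⋂ i, B k i = ∅)
    {H : Finset α} (hA : ∀ k, ∃ p ∈ H, p ∈ A k) (hB : ∀ k i, ∃ p ∈ H, p ∈ B k i) :
    3 ≤ H.card := by
  by_contra! hcard
  choose a haH haA using hA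
  choose b hbH hbB using hB
  obtain ⟨k, hk⟩ := exists_map_add_one_eq_map_add_two hcard haH
  have b_ne (i) : b k i ≠ a (k + 1) := fun h =>
    Set.disjoint_left.1 (hAB k i) ⟨haA (k + 1), hk ▸ haA (k + 2)⟩ (h ▸ hbB k i)
  have b_const (i j) : b k i = b k j := by
    by_contra hij
    exact hcard.not_ge <| Finset.two_lt_card.2
      ⟨_, haH (k + 1), _, hbH k i, _, hbH k j, (b_ne i).symm, (b_ne j).symm, hij⟩
  obtain ⟨i, -⟩ := Set.iInter_eq_empty_iff.1 (hBB k) (a k)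
  obtain ⟨j, hj⟩ := Set.iInter_eq_empty_iff.1 (hBB k) (b k i)
  exact hj (b_const i j ▸ hbB k j)

end Combinatorics

section HalfPlanes

variable {R : Type*} [CommRing R]

/-- The cross product of two plane vectors. -/
def cross (u v : R × R) : R := u.1 * v.2 - u.2 * v.1

/-- The dot product of two plane vectors. -/
def dot (u v : R × R) : R := u.1 * v.1 + u.2 * v.2

theorem sum_cross_mul_dot (n : Fin 3 → R × R) (p : R × R) :
    ∑ i, cross (n (i + 1)) (n (i + 2)) * dot (n i) p = 0 := by
  simp only [cross, dot, Fin.sum_univ_three, Fin.reduceAdd]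
  ring

-- The cross products of two out of three plane vectors are the coefficients of their linear
-- dependency, so they are the Farkas multipliers for three half-planes with these normals.
theorem sum_cross_mul_nonneg [PartialOrder R] [IsOrderedRing R] {n : Fin 3 → R × R}
    {b : Fin 3 → R} {p : R × R} (hn : ∀ i, 0 ≤ cross (n (i + 1)) (n (i + 2)))
    (hp : ∀ i, dot (n i) p ≤ b i) : 0 ≤ ∑ i, cross (n (i + 1)) (n (i + 2)) * b i := by
  rw [← sum_cross_mul_dot n p]
  gcongr with i
  exacts [hn i, hp i]

end HalfPlanes

theorem exists_cos_sin_eq_div {a b r : ℝ} (hr : 0 < r) (h : a ^ 2 + b ^ 2 = r ^ 2) :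
    ∃ θ, Real.cos θ = a / r ∧ Real.sin θ = b / r := by
  have hnorm : ‖(⟨a, b⟩ : ℂ)‖ = r := by
    rw [Complex.norm_eq_sqrt_sq_add_sq, h, Real.sqrt_sq hr.le]
  have hne : (⟨a, b⟩ : ℂ) ≠ 0 := norm_pos_iff.1 (hnorm ▸ hr)
  exact ⟨Complex.arg ⟨a, b⟩, by rw [Complex.cos_arg hne, hnorm], by rw [Complex.sin_arg, hnorm]⟩

/-- The point of the plane that `p` stands for on the lattice of mesh `1 / N`. -/
def latticePoint (N : ℝ) (p : ℤ × ℤ) : Pt := !₂[p.1 / N, p.2 / N]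

theorem latticePoint_injective {N : ℝ} (hN : N ≠ 0) : Function.Injective (latticePoint N) := by
  intro p q h
  have h₀ := congrArg (· 0) h
  have h₁ := congrArg (· 1) h
  simp only [latticePoint, PiLp.toLp_apply, Matrix.cons_val_zero, Matrix.cons_val_one,
    div_left_inj' hN, Int.cast_inj] at h₀ h₁
  exact Prod.ext h₀ h₁

/-- A square in the plane `ℤ × ℤ`, given by its centre and the vector from there to the midpoint
of a side. -/
structure LatticeSquare where
  center : ℤ × ℤ
  halfSide : ℤ × ℤ

namespace LatticeSquare

variable {N : ℝ} {s : LatticeSquare}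

/-- The squared length of half a side. -/
def normSq (s : LatticeSquare) : ℤ := dot s.halfSide s.halfSide

/-- The closed square `s`, shrunk by the factor `N`, as a region of the Euclidean plane. -/
def toSet (N : ℝ) (s : LatticeSquare) : Set Pt :=
  {p | |s.halfSide.1 * (N * p 0 - s.center.1) + s.halfSide.2 * (N * p 1 - s.center.2)| ≤
        (s.normSq : ℝ) ∧
      |s.halfSide.2 * (N * p 0 - s.center.1) - s.halfSide.1 * (N * p 1 - s.center.2)| ≤
        (s.normSq : ℝ)}

/-- Membership of a lattice point in a lattice square, as a decidable condition on integers. -/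
def Contains (s : LatticeSquare) (p : ℤ × ℤ) : Prop :=
  |dot s.halfSide (p - s.center)| ≤ s.normSq ∧ |cross s.halfSide (p - s.center)| ≤ s.normSq

instance (s : LatticeSquare) : DecidablePred s.Contains :=
  fun _ => inferInstanceAs (Decidable (_ ∧ _))

theorem latticePoint_mem_toSet (hN : N ≠ 0) {p : ℤ × ℤ} :
    latticePoint N p ∈ s.toSet N ↔ s.Contains p := by
  simp only [toSet, Contains, latticePoint, dot, cross, Set.mem_ofPred_eq,
    Matrix.cons_val_zero, Matrix.cons_val_one, mul_div_cancel₀ _ hN, Prod.fst_sub, Prod.snd_sub]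
  rw [abs_sub_comm (s.halfSide.1 * (p.2 - s.center.2))]
  norm_cast

theorem isUnitSquare_toSet (hN : 0 < N) (hs : 4 * (s.normSq : ℝ) = N ^ 2) :
    IsUnitSquare (s.toSet N) := by
  obtain ⟨θ, hcos, hsin⟩ := exists_cos_sin_eq_div (a := 2 * s.halfSide.1) (b := 2 * s.halfSide.2)
    hN (by rw [← hs, normSq, dot]; push_cast; ring)
  have hscale (t : ℝ) : |t| ≤ s.normSq ↔ |2 * t / N ^ 2| ≤ 1 / 2 := by
    rw [abs_div, abs_mul, abs_of_pos (pow_pos hN 2), div_le_iff₀ (pow_pos hN 2), ← hs,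
      abs_two]
    constructor <;> intro h <;> linarith
  refine ⟨latticePoint N s.center, θ, Set.ext fun p => ?_⟩
  simp only [toSet, sqSet, sqForm1, sqForm2, latticePoint, Set.mem_ofPred_eq, hcos, hsin, hscale,
    PiLp.toLp_apply, Matrix.cons_val_zero, Matrix.cons_val_one]
  congr! 3 <;> field_simp

/-- The four outer side normals, counterclockwise. -/
def normal (s : LatticeSquare) : Fin 4 → ℤ × ℤ :=
  ![(s.halfSide.1, s.halfSide.2), (-s.halfSide.2, s.halfSide.1),
    (-s.halfSide.1, -s.halfSide.2), (s.halfSide.2, -s.halfSide.1)]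

/-- The maximum over the square of the dot product with its `k`-th normal. -/
def bound (s : LatticeSquare) (k : Fin 4) : ℤ := dot (s.normal k) s.center + s.normSq

theorem dot_normal_le_bound {p : Pt} (hp : p ∈ s.toSet N) (k : Fin 4) :
    dot ((s.normal k).map Int.cast Int.cast) (N * p 0, N * p 1) ≤ (s.bound k : ℝ) := by
  obtain ⟨h₁, h₂⟩ := hp
  rw [abs_le] at h₁ h₂
  fin_cases k <;>
    simp only [dot, normal, bound, Prod.map, Fin.zero_eta, Fin.mk_one, Fin.reduceFinMk,
      Matrix.cons_val] <;>
    push_cast <;>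
    linarith

/-- A decidable certificate that three squares have no common point: a side of each such that the
half-planes bounded by these sides violate `sum_cross_mul_nonneg`. -/
def SidesSeparate (s : Fin 3 → LatticeSquare) : Prop :=
  ∃ k : Fin 3 → Fin 4, let n i := (s i).normal (k i)
    (∀ i, 0 ≤ cross (n (i + 1)) (n (i + 2))) ∧
      ∑ i, cross (n (i + 1)) (n (i + 2)) * (s i).bound (k i) < 0

instance : DecidablePred SidesSeparate :=
  fun _ => inferInstanceAs (Decidable (∃ _ : Fin 3 → Fin 4, _ ∧ _))

theorem SidesSeparate.iInter_toSet_eq_empty {s : Fin 3 → LatticeSquare} (h : SidesSeparate s) :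
    ⋂ i, (s i).toSet N = ∅ := by
  obtain ⟨k, hcross, hneg⟩ := h
  refine Set.iInter_eq_empty_iff.2 fun p => ?_
  by_contra! hp
  have hcast (u v : ℤ × ℤ) :
      cross (u.map Int.cast Int.cast) (v.map Int.cast Int.cast) = ((cross u v : ℤ) : ℝ) := by
    simp [cross]
  have hnonneg := sum_cross_mul_nonneg (fun i => by simpa [hcast] using hcross i)
    fun i => dot_normal_le_bound (hp i) (k i)
  simp only [hcast] at hnonneg
  exact hneg.not_ge (by exact_mod_cast hnonneg)

end LatticeSquare

open LatticeSquare

/-- The nine squares, with lengths in tenths, in three groups: `nineSquares k` is the group `B k`,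
and its first member is `A k`. A rotation of a square by 120° is one by 30°, so the angles 0°, 30°
and 60° would make `k ↦ k + 1` a rotation by 120°; the vectors `(4, 3)` and `(3, 4)`, of the same
length as `(5, 0)`, are near enough to the last two. -/
def nineSquares (k i : Fin 3) : LatticeSquare where
  center :=
    ![![(0, -7), (5, 1), (-5, 1)],
      ![(6, 4), (-3, 4), (2, -4)],
      ![(-6, 4), (-2, -4), (3, 4)]] k i
  halfSide := ![(5, 0), (4, 3), (3, 4)] (k + i)

/-- Lattice points such that any two of the nine squares share one of them, and no two of the nine
squares contain the same ones. -/
def witnessPoints : Finset (ℤ × ℤ) :=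
  {(0, 5), (-5, -2), (5, -2), (-2, -2), (2, -2), (-2, 1), (2, 1), (-2, 2), (2, 2)}

/-- Three lattice points that hit the nine squares. -/
def hittingPoints : Finset (ℤ × ℤ) := {(-2, -2), (-2, 1), (2, 1)}

theorem isUnitSquare_nineSquares (k i : Fin 3) : IsUnitSquare ((nineSquares k i).toSet 10) := by
  have hnormSq : ∀ k i, (nineSquares k i).normSq = 25 := by decide
  exact isUnitSquare_toSet (by norm_num) (by rw [hnormSq]; norm_num)

theorem injective_nineSquares_toSet :
    Function.Injective fun x : Fin 3 × Fin 3 => (nineSquares x.1 x.2).toSet 10 := by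
  have hdistinct : ∀ x y : Fin 3 × Fin 3, (∀ p ∈ witnessPoints,
      (nineSquares x.1 x.2).Contains p ↔ (nineSquares y.1 y.2).Contains p) → x = y := by decide
  refine fun x y hxy => hdistinct x y fun p _ => ?_
  simp only [← latticePoint_mem_toSet (N := 10) (by norm_num)]
  exact Set.ext_iff.1 hxy _

theorem nineSquares_inter_nonempty (k i l j : Fin 3) :
    ((nineSquares k i).toSet 10 ∩ (nineSquares l j).toSet 10).Nonempty := by
  have hwitness : ∀ k i l j, ∃ p ∈ witnessPoints,
      (nineSquares k i).Contains p ∧ (nineSquares l j).Contains p := by decide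
  obtain ⟨p, -, hki, hlj⟩ := hwitness k i l j
  have hN : (10 : ℝ) ≠ 0 := by norm_num
  exact ⟨latticePoint 10 p, (latticePoint_mem_toSet hN).2 hki, (latticePoint_mem_toSet hN).2 hlj⟩

theorem exists_card_eq_three_hits_nineSquares :
    ∃ H : Finset Pt, H.card = 3 ∧ ∀ k i, ∃ p ∈ H, p ∈ (nineSquares k i).toSet 10 := by
  have hhit : ∀ k i, ∃ p ∈ hittingPoints, (nineSquares k i).Contains p := by decide
  have hN : (10 : ℝ) ≠ 0 := by norm_num
  refine ⟨hittingPoints.image (latticePoint 10),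
    Finset.card_image_of_injective _ (latticePoint_injective hN), fun k i => ?_⟩
  obtain ⟨p, hp, hki⟩ := hhit k i
  exact ⟨_, Finset.mem_image_of_mem _ hp, (latticePoint_mem_toSet hN).2 hki⟩

theorem disjoint_inter_nineSquares (k i : Fin 3) :
    Disjoint ((nineSquares (k + 1) 0).toSet 10 ∩ (nineSquares (k + 2) 0).toSet 10)
      ((nineSquares k i).toSet 10) := by
  have hseparate : ∀ k i, SidesSeparate
      ![nineSquares (k + 1) 0, nineSquares (k + 2) 0, nineSquares k i] := by decide
  refine Set.disjoint_left.2 fun p hp hpki => ?_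
  obtain ⟨j, hj⟩ := Set.iInter_eq_empty_iff.1 (hseparate k i).iInter_toSet_eq_empty p
  fin_cases j
  exacts [hj hp.1, hj hp.2, hj hpki]

theorem iInter_nineSquares_eq_empty (k : Fin 3) : ⋂ i, (nineSquares k i).toSet 10 = ∅ := by
  have hseparate : ∀ k, SidesSeparate (nineSquares k) := by decide
  exact (hseparate k).iInter_toSet_eq_empty

theorem three_le_card_of_hits_nineSquares {H : Finset Pt}
    (hH : ∀ k i, ∃ p ∈ H, p ∈ (nineSquares k i).toSet 10) : 3 ≤ H.card :=
  three_le_card_of_hits disjoint_inter_nineSquares iInter_nineSquares_eq_empty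
    (fun k => hH k 0) hH

theorem stmt_16 : ∃ f : Fin 9 → Set Pt, Function.Injective f ∧
    (∀ i, IsUnitSquare (f i)) ∧
    (∀ i j, (f i ∩ f j).Nonempty) ∧
    (∀ H : Finset Pt, (∀ i, ∃ p ∈ H, p ∈ f i) → 3 ≤ H.card) ∧
    (∃ H : Finset Pt, H.card = 3 ∧ ∀ i, ∃ p ∈ H, p ∈ f i) := by
  let e : Fin 9 ≃ Fin 3 × Fin 3 := (finProdFinEquiv (m := 3) (n := 3)).symm
  obtain ⟨H, hcard, hH⟩ := exists_card_eq_three_hits_nineSquares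
  exact ⟨fun m => (nineSquares (e m).1 (e m).2).toSet 10,
    injective_nineSquares_toSet.comp e.injective,
    fun m => isUnitSquare_nineSquares _ _,
    fun m n => nineSquares_inter_nonempty _ _ _ _,
    fun H' hH' => three_le_card_of_hits_nineSquares fun k i => by
      simpa only [e.apply_symm_apply] using hH' (e.symm (k, i)),
    H, hcard, fun m => hH _ _⟩
end
end
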